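/- Let m ≥ 1 and k ≥ 2 be integers, and let G be a graph whose complement is K_k^m-free. Let S_1, …, S_k ⊆ V(G) be disjoint sets of size at least m + k − 1 each. Then for some i ≠ j there are two vertex-disjoint edges of G between S_i and S_j. -/

import Mathlib

def ContainsCopy {α β : Type*} (H : SimpleGraph α) (G : SimpleGraph β) : Prop :=
  ∃ f : α → β, Function.Injective f ∧ ∀ a b, H.Adj a b → G.Adj (f a) (f b)

/-!
If `S i` and `S j` span no two disjoint edges, then the edges between them form a star. Deleting
the centre of each such star removes at most `k - 1` vertices from each `S i`: at least `m` vertices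
survive in each set, no edge of `G` joins two of the surviving sets, and so they span a copy of
`K_k^m` in the complement.
-/

section

open Finset SimpleGraph

variable {V ι : Type*} {G : SimpleGraph V} {s t : Finset V} {S : ι → Finset V} {i j : ι} {x y : V}

theorem containsCopy_iff_isContained {α β : Type*} {H : SimpleGraph α} {G : SimpleGraph β} :
    ContainsCopy H G ↔ H ⊑ G :=
  ⟨fun ⟨f, hf, hadj⟩ ↦ ⟨⟨f, fun {a b} ↦ hadj a b⟩, hf⟩,
    fun ⟨f⟩ ↦ ⟨f, f.injective, fun _ _ ↦ f.toHom.map_adj⟩⟩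

theorem completeMultipartiteGraph_isContained {α : ι → Type*} [∀ i, Fintype (α i)]
    (hcard : ∀ i, Fintype.card (α i) ≤ #(S i))
    (hadj : Pairwise fun i j ↦ ∀ x ∈ S i, ∀ y ∈ S j, G.Adj x y) :
    completeMultipartiteGraph α ⊑ G := by
  have hemb (i) : Nonempty (α i ↪ S i) :=
    Function.Embedding.nonempty_of_card_le (by simpa using hcard i)
  let f (i) : α i ↪ S i := (hemb i).some
  have hf {i j} (hij : i ≠ j) (x : α i) (y : α j) : G.Adj (f i x) (f j y) :=
    hadj hij _ (f i x).2 _ (f j y).2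
  refine ⟨⟨fun p ↦ f p.1 p.2, fun {p q} hpq ↦ hf hpq p.2 q.2⟩, ?_⟩
  rintro ⟨i, x⟩ ⟨j, y⟩ (hxy : (f i x : V) = f j y)
  obtain rfl : i = j := by
    by_contra hij
    exact (hf hij x y).ne hxy
  rw [(f i).injective (Subtype.ext hxy)]

/-- There are two vertex-disjoint edges of `G` between `s` and `t`; without such a pair, the edges
between disjoint sets form a star. -/
def HasTwoDisjointEdges (G : SimpleGraph V) (s t : Finset V) : Prop :=
  ∃ a b a' b', a ∈ s ∧ a' ∈ s ∧ b ∈ t ∧ b' ∈ t ∧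
    G.Adj a b ∧ G.Adj a' b' ∧ a ≠ a' ∧ a ≠ b' ∧ b ≠ a' ∧ b ≠ b'

theorem eq_or_eq_of_not_hasTwoDisjointEdges (hst : Disjoint s t)
    (h : ¬ HasTwoDisjointEdges G s t) {a b a' b' : V} (ha : a ∈ s) (hb : b ∈ t)
    (hab : G.Adj a b) (ha' : a' ∈ s) (hb' : b' ∈ t) (hab' : G.Adj a' b') :
    a = a' ∨ b = b' := by
  by_contra! ⟨haa', hbb'⟩
  exact h ⟨a, b, a', b', ha, ha', hb, hb', hab, hab', haa',
    disjoint_iff_ne.mp hst a ha b' hb', (disjoint_iff_ne.mp hst a' ha' b hb).symm, hbb'⟩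

open scoped Classical in
/-- The vertices of `s` incident to an edge of `G` between `s` and `t`. Having at most one of them
encodes that these edges form a star centred in `s`. -/
noncomputable def endpoints (G : SimpleGraph V) (s t : Finset V) : Finset V :=
  {x ∈ s | ∃ y ∈ t, G.Adj x y}

theorem mem_endpoints : x ∈ endpoints G s t ↔ x ∈ s ∧ ∃ y ∈ t, G.Adj x y := by
  simp only [endpoints, mem_filter]

theorem card_endpoints_le_one_or (hst : Disjoint s t) (h : ¬ HasTwoDisjointEdges G s t) :
    #(endpoints G s t) ≤ 1 ∨ #(endpoints G t s) ≤ 1 := by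
  by_contra! ⟨hs, ht⟩
  -- Two edges with distinct ends in `s` must share their end in `t`; a third edge with another end
  -- in `t` would have to meet both of them in `s`.
  obtain ⟨b, hb⟩ := card_pos.mp (zero_lt_one.trans ht)
  obtain ⟨hbt, a, has, hba⟩ := mem_endpoints.mp hb
  obtain ⟨a', ha', haa'⟩ := exists_mem_ne hs a
  obtain ⟨ha's, c, hct, hac⟩ := mem_endpoints.mp ha'
  obtain ⟨b', hb', hbb'⟩ := exists_mem_ne ht b
  obtain ⟨hb't, d, hds, hbd⟩ := mem_endpoints.mp hb'
  obtain rfl : c = b := (eq_or_eq_of_not_hasTwoDisjointEdges hst h ha's hct hac has hbt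
    hba.symm).resolve_left haa'
  have hda : d = a := (eq_or_eq_of_not_hasTwoDisjointEdges hst h hds hb't hbd.symm has hbt
    hba.symm).resolve_right hbb'
  have hda' : d = a' := (eq_or_eq_of_not_hasTwoDisjointEdges hst h hds hb't hbd.symm ha's hbt
    hac).resolve_right hbb'
  exact haa' (hda'.symm.trans hda)

variable [Fintype ι]

open scoped Classical in
/-- The vertices of `S i` that are, for some `j ≠ i`, the common endpoint in `S i` of all the edges
of `G` between `S i` and `S j`. Deleting them from every `S i` destroys all stars at once. -/
noncomputable def starCenters (G : SimpleGraph V) (S : ι → Finset V) (i : ι) : Finset V :=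
  {j ∈ univ.erase i | #(endpoints G (S i) (S j)) ≤ 1}.biUnion fun j ↦ endpoints G (S i) (S j)

theorem mem_starCenters : x ∈ starCenters G S i ↔
    ∃ j ≠ i, #(endpoints G (S i) (S j)) ≤ 1 ∧ x ∈ endpoints G (S i) (S j) := by
  simp only [starCenters, mem_biUnion, mem_filter, mem_erase, mem_univ, and_true, and_assoc]

theorem card_starCenters_le : #(starCenters G S i) ≤ Fintype.card ι - 1 := by
  classical
  calc #(starCenters G S i)
      ≤ #{j ∈ univ.erase i | #(endpoints G (S i) (S j)) ≤ 1} * 1 :=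
        card_biUnion_le_card_mul _ _ _ fun j hj ↦ (mem_filter.mp hj).2
    _ ≤ #(univ.erase i) := by simpa only [mul_one] using card_filter_le _ _
    _ = Fintype.card ι - 1 := card_erase_of_mem (mem_univ i)

theorem mem_starCenters_or_of_adj (hij : i ≠ j) (hdisj : Disjoint (S i) (S j))
    (h : ¬ HasTwoDisjointEdges G (S i) (S j)) (hx : x ∈ S i) (hy : y ∈ S j) (hxy : G.Adj x y) :
    x ∈ starCenters G S i ∨ y ∈ starCenters G S j :=
  (card_endpoints_le_one_or hdisj h).imp
    (fun hi ↦ mem_starCenters.mpr ⟨j, hij.symm, hi, mem_endpoints.mpr ⟨hx, y, hy, hxy⟩⟩)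
    (fun hj ↦ mem_starCenters.mpr ⟨i, hij, hj, mem_endpoints.mpr ⟨hy, x, hx, hxy.symm⟩⟩)

theorem stmt6_general {α : ι → Type*} [∀ i, Fintype (α i)]
    (hfree : (completeMultipartiteGraph α).Free Gᶜ)
    (hdisj : Pairwise fun i j ↦ Disjoint (S i) (S j))
    (hsize : ∀ i, Fintype.card (α i) + Fintype.card ι - 1 ≤ #(S i)) :
    ∃ i j, i ≠ j ∧ HasTwoDisjointEdges G (S i) (S j) := by
  classical
  by_contra! h
  have hcard (i) : Fintype.card (α i) ≤ #(S i \ starCenters G S i) := by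
    have hι : 0 < Fintype.card ι := Fintype.card_pos_iff.mpr ⟨i⟩
    have hcenters := card_starCenters_le (G := G) (S := S) (i := i)
    have hsdiff := le_card_sdiff (starCenters G S i) (S i)
    have hi := hsize i
    lia
  refine hfree (completeMultipartiteGraph_isContained hcard fun i j hij x hx y hy ↦ ?_)
  obtain ⟨hxi, hx⟩ := mem_sdiff.mp hx
  obtain ⟨hyj, hy⟩ := mem_sdiff.mp hy
  refine (compl_adj G x y).mpr ⟨disjoint_iff_ne.mp (hdisj hij) x hxi y hyj, fun hxy ↦ ?_⟩
  exact (mem_starCenters_or_of_adj hij (hdisj hij) (h i j hij) hxi hyj hxy).elim hx hy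

end

/-- Let `m ≥ 1`, `k ≥ 2` be integers and let `G` be a graph whose complement is
`K_k^m`-free. Let `S_1, …, S_k ⊆ V(G)` be disjoint sets of size at least `m + k - 1` each. Then
for some `i ≠ j` there are two vertex-disjoint edges of `G` between `S i` and `S j`. -/
theorem stmt6 {V : Type*} [Fintype V] (m k : ℕ) (hm : 1 ≤ m) (hk : 2 ≤ k)
    (G : SimpleGraph V)
    (hfree : ¬ ContainsCopy (SimpleGraph.completeMultipartiteGraph fun _ : Fin k => Fin m) Gᶜ)
    (S : Fin k → Finset V)
    (hdisj : Pairwise fun i j => Disjoint (S i) (S j))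
    (hsize : ∀ i, m + k - 1 ≤ (S i).card) :
    ∃ i j, i ≠ j ∧ ∃ a b a' b', a ∈ S i ∧ a' ∈ S i ∧ b ∈ S j ∧ b' ∈ S j ∧
      G.Adj a b ∧ G.Adj a' b' ∧ a ≠ a' ∧ a ≠ b' ∧ b ≠ a' ∧ b ≠ b' :=
  stmt6_general (mt containsCopy_iff_isContained.mpr hfree) hdisj
    (by simpa only [Fintype.card_fin] using hsize)
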